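/- arXiv:2407.20614 — 3 statements merged into one kernel-verified Lean document; each statement's English description precedes it below -/
import Mathlib

section
/- Let V be an n-dimensional vector space over the finite field 𝔽_q with n ≥ 2t+1 and t ≥ 1, and let F be a cover-free family of 2t-dimensional subspaces of V. Then for every F ∈ F, |M_t(F)| ≥ q^t [2t-1 choose t]_q and |N_t(F)| ≤ [2t-1 choose t-1]_q; moreover, equality holds (in both) if and only if N_t(F) is an intersecting family of size [2t-1 choose t-1]_q. -/
/-- A family of subspaces is cover-free if there are no three distinct members
`F₀, F₁, F₂` with `F₀ ≤ (F₀ ⊓ F₁) ⊔ (F₀ ⊓ F₂)`. -/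
def IsCoverFree {K V : Type*} [Field K] [AddCommGroup V] [Module K V]
    (F : Set (Submodule K V)) : Prop :=
  ¬ ∃ F₀ F₁ F₂ : Submodule K V, F₀ ∈ F ∧ F₁ ∈ F ∧ F₂ ∈ F ∧
    F₀ ≠ F₁ ∧ F₀ ≠ F₂ ∧ F₁ ≠ F₂ ∧ F₀ ≤ (F₀ ⊓ F₁) ⊔ (F₀ ⊓ F₂)

/-- The Gaussian binomial coefficient `[m choose k]_q` as a rational number. -/
def GaussQ (q m k : ℕ) : ℚ :=
  ∏ i ∈ Finset.range k, ((q : ℚ) ^ (m - i) - 1) / ((q : ℚ) ^ (k - i) - 1)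

/-- `M_t(F₀)`: the `t`-dimensional subspaces of `F₀` that are private, i.e. lie in
exactly one member of the family. -/
def Mset {K V : Type*} [Field K] [AddCommGroup V] [Module K V]
    (F : Set (Submodule K V)) (t : ℕ) (F₀ : Submodule K V) : Set (Submodule K V) :=
  {T | T ≤ F₀ ∧ Module.finrank K T = t ∧ {G ∈ F | T ≤ G}.ncard = 1}

/-- `N_t(F₀)`: the `t`-dimensional subspaces of `F₀` lying in more than one member
of the family. -/
def Nset {K V : Type*} [Field K] [AddCommGroup V] [Module K V]
    (F : Set (Submodule K V)) (t : ℕ) (F₀ : Submodule K V) : Set (Submodule K V) :=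
  {T | T ≤ F₀ ∧ Module.finrank K T = t ∧ 1 < {G ∈ F | T ≤ G}.ncard}

/-!
If two non-private `t`-subspaces `A`, `B` of `F₀` met trivially, they would span the `2t`-space
`F₀`. Other members of `F` containing `A` and `B` respectively would then cover `F₀` if distinct,
and contain `F₀` if equal; both are impossible. Hence the non-private `t`-subspaces of `F₀` form an
intersecting family, and the Erdős–Ko–Rado theorem for subspaces bounds their number by
`[2t-1 choose t-1]_q`; the `q`-Pascal rule turns this into the lower bound for the private ones.

When `t` divides the dimension, Erdős–Ko–Rado follows from Katona's averaging argument
(Greene–Kleitman): a `t`-spread is a set of pairwise disjoint `t`-spaces, an intersecting family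
contains at most one element of each of its translates under the general linear group, and this
group is transitive on `t`-spaces. The spread is obtained by viewing the space as a vector space
over the extension field of degree `t`.
-/

open Module Submodule
open scoped LinearAlgebra.Projectivization Pointwise

section GaussQ

variable {q m k : ℕ}

theorem gaussQ_eq_div_mul_pred_pred (hm : m ≠ 0) (hk : k ≠ 0) :
    GaussQ q m k = ((q : ℚ) ^ m - 1) / ((q : ℚ) ^ k - 1) * GaussQ q (m - 1) (k - 1) := by
  obtain ⟨m, rfl⟩ := Nat.exists_eq_succ_of_ne_zero hm
  obtain ⟨k, rfl⟩ := Nat.exists_eq_succ_of_ne_zero hk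
  simp only [GaussQ, Nat.succ_eq_add_one, Nat.add_sub_cancel, Finset.prod_range_succ',
    Nat.add_sub_add_right, Nat.sub_zero]
  rw [mul_comm]

theorem gaussQ_eq_div_mul_pred (hk : k ≠ 0) :
    GaussQ q m k =
      ((q : ℚ) ^ (m - (k - 1)) - 1) / ((q : ℚ) ^ k - 1) * GaussQ q m (k - 1) := by
  obtain ⟨k, rfl⟩ := Nat.exists_eq_succ_of_ne_zero hk
  simp only [GaussQ, Nat.succ_eq_add_one, Nat.add_sub_cancel, Finset.prod_div_distrib]
  rw [Finset.prod_range_succ, Finset.prod_range_succ' (fun i ↦ (q : ℚ) ^ (k + 1 - i) - 1)]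
  simp only [Nat.add_sub_add_right, Nat.sub_zero]
  rw [mul_div_mul_comm, mul_comm]

theorem gaussQ_pascal (hq : 1 < q) (hk : k ≠ 0) (hkm : k ≤ m) :
    GaussQ q m k = (q : ℚ) ^ k * GaussQ q (m - 1) k + GaussQ q (m - 1) (k - 1) := by
  have hq_pow : (q : ℚ) ^ k - 1 ≠ 0 :=
    (sub_pos.2 <| one_lt_pow₀ (by exact_mod_cast hq) hk).ne'
  have h_exp : (q : ℚ) ^ m = q ^ k * q ^ (m - 1 - (k - 1)) := by
    rw [← pow_add]
    congr 1
    omega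
  rw [gaussQ_eq_div_mul_pred_pred (by omega) hk, gaussQ_eq_div_mul_pred (m := m - 1) hk, h_exp]
  field_simp
  ring

end GaussQ

section Counting

variable {K W : Type*} [Field K] [AddCommGroup W] [Module K W] {k : ℕ}

theorem span_range_coe_eq_of_linearIndependent {T : Submodule K W}
    [FiniteDimensional K T] {s : Fin k → T} (hs : LinearIndependent K s) (hT : finrank K T = k) :
    span K (Set.range fun i ↦ (s i : W)) = T := by
  have h_top : span K (Set.range s) = ⊤ :=
    hs.span_eq_top_of_card_eq_finrank' (by rw [hT, Fintype.card_fin])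
  rw [Set.range_comp' Subtype.val s, ← Submodule.coe_subtype, ← map_span, h_top, map_subtype_top]

theorem natCard_sigma_linearIndependent [FiniteDimensional K W] :
    Nat.card (Σ T : {T : Submodule K W // finrank K T = k},
        {s : Fin k → T.1 // LinearIndependent K s}) =
      Nat.card {s : Fin k → W // LinearIndependent K s} := by
  refine Nat.card_eq_of_bijective
    (fun p ↦ ⟨fun i ↦ p.2.1 i, p.2.2.map' p.1.1.subtype (ker_subtype _)⟩) ⟨?_, ?_⟩
  · rintro ⟨⟨T, hT⟩, s, hs⟩ ⟨⟨T', hT'⟩, s', hs'⟩ h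
    have h_val : (fun i ↦ (s i : W)) = fun i ↦ (s' i : W) := congrArg Subtype.val h
    obtain rfl : T = T' :=
      (span_range_coe_eq_of_linearIndependent hs hT).symm.trans <|
        h_val ▸ span_range_coe_eq_of_linearIndependent hs' hT'
    obtain rfl : s = s' := funext fun i ↦ Subtype.ext (congrFun h_val i)
    rfl
  · rintro ⟨s, hs⟩
    have h_finrank : finrank K (span K (Set.range s)) = k := by
      rw [finrank_span_eq_card hs, Fintype.card_fin]
    exact ⟨⟨⟨_, h_finrank⟩, fun i ↦ ⟨s i, subset_span ⟨i, rfl⟩⟩,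
      LinearIndependent.of_comp (span K (Set.range s)).subtype hs⟩, rfl⟩

theorem ncard_setOf_finrank_eq_mul_prod [Fintype K] [FiniteDimensional K W] (hk : k ≤ finrank K W) :
    {T : Submodule K W | finrank K T = k}.ncard *
        ∏ i : Fin k, (Fintype.card K ^ k - Fintype.card K ^ i.val) =
      ∏ i : Fin k, (Fintype.card K ^ finrank K W - Fintype.card K ^ i.val) := by
  have : Finite W := Module.finite_of_finite K
  have : Fintype {T : Submodule K W // finrank K T = k} := Fintype.ofFinite _
  have h_tuples (T : {T : Submodule K W // finrank K T = k}) :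
      Nat.card {s : Fin k → T.1 // LinearIndependent K s} =
        ∏ i : Fin k, (Fintype.card K ^ k - Fintype.card K ^ i.val) := by
    rw [card_linearIndependent T.2.ge, T.2]
  rw [← card_linearIndependent hk, ← natCard_sigma_linearIndependent, Nat.card_sigma,
    Finset.sum_congr rfl fun T _ ↦ h_tuples T, Finset.sum_const, smul_eq_mul, Finset.card_univ,
    ← Nat.card_eq_fintype_card (α := {T : Submodule K W // finrank K T = k})]
  rfl

theorem cast_prod_pow_sub_pow {q a : ℕ} (hq : 0 < q) (hka : k ≤ a) :
    ((∏ i : Fin k, (q ^ a - q ^ i.val) : ℕ) : ℚ) =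
      ∏ i ∈ Finset.range k, ((q : ℚ) ^ i * ((q : ℚ) ^ (a - i) - 1)) := by
  rw [Finset.prod_range, Nat.cast_prod]
  refine Finset.prod_congr rfl fun i _ ↦ ?_
  have hia : i.val ≤ a := i.2.le.trans hka
  rw [Nat.cast_sub (Nat.pow_le_pow_right hq hia), mul_sub, ← pow_add, mul_one,
    Nat.add_sub_cancel' hia]
  push_cast
  rfl

theorem ncard_setOf_finrank_eq [Finite K] [FiniteDimensional K W] (hk : k ≤ finrank K W) :
    ({T : Submodule K W | finrank K T = k}.ncard : ℚ) = GaussQ (Nat.card K) (finrank K W) k := by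
  have := Fintype.ofFinite K
  rw [Nat.card_eq_fintype_card]
  have hq : (1 : ℚ) < Fintype.card K := by exact_mod_cast Fintype.one_lt_card
  have h_ne (i : ℕ) (hi : i ∈ Finset.range k) :
      ((Fintype.card K : ℚ) ^ i * ((Fintype.card K : ℚ) ^ (k - i) - 1)) ≠ 0 := by
    have h_one_lt : (1 : ℚ) < (Fintype.card K : ℚ) ^ (k - i) :=
      one_lt_pow₀ hq (Nat.sub_pos_of_lt (Finset.mem_range.1 hi)).ne'
    exact mul_ne_zero (by positivity) (sub_pos.2 h_one_lt).ne'
  have h_count := congrArg (Nat.cast (R := ℚ)) (ncard_setOf_finrank_eq_mul_prod (W := W) hk)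
  rw [Nat.cast_mul, cast_prod_pow_sub_pow Fintype.card_pos le_rfl,
    cast_prod_pow_sub_pow Fintype.card_pos hk,
    ← eq_div_iff (Finset.prod_ne_zero_iff.2 h_ne), ← Finset.prod_div_distrib] at h_count
  rw [h_count, GaussQ]
  exact Finset.prod_congr rfl fun i _ ↦ mul_div_mul_left _ _ (by positivity)

end Counting

section CliqueCoclique

open MulAction

variable {G X : Type*} [Group G] [MulAction G X] {a x y : X}

theorem natCard_smul_eq_of_mem_orbit (hx : x ∈ orbit G a) (hy : y ∈ orbit G a) :
    Nat.card {g : G // g • x = y} = Nat.card (stabilizer G a) := by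
  obtain ⟨h, rfl⟩ := hx
  obtain ⟨k, rfl⟩ := hy
  refine Nat.card_congr (((Equiv.mulLeft k⁻¹).trans (Equiv.mulRight h)).subtypeEquiv fun g ↦ ?_)
  simp [mem_stabilizer_iff, mul_smul, inv_smul_eq_iff]

-- The fibres `{g | g • x = y}` for `(x, y) ∈ C × N` are pairwise disjoint and all have the size of
-- a stabilizer, so they fill at most the whole group.
theorem ncard_mul_ncard_le_of_subset_orbit [Finite G] {C N : Set X} (hC : C ⊆ orbit G a)
    (hN : N ⊆ orbit G a)
    (h_one : ∀ g : G, ∀ x ∈ C, ∀ y ∈ C, g • x ∈ N → g • y ∈ N → x = y) :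
    C.ncard * N.ncard ≤ (orbit G a).ncard := by
  classical
  have := Fintype.ofFinite G
  have h_fin : (orbit G a).Finite := Set.finite_range _
  lift C to Finset X using h_fin.subset hC
  lift N to Finset X using h_fin.subset hN
  have h_orbit : (orbit G a).ncard * Nat.card (stabilizer G a) = Nat.card G := by
    rw [← Nat.card_coe_set_eq, ← Nat.card_prod, Nat.card_congr (orbitProdStabilizerEquivGroup G a)]
  have h_count : (C ×ˢ N).card * Nat.card (stabilizer G a) ≤ (Finset.univ : Finset G).card * 1 := by
    refine Finset.card_mul_le_card_mul (fun (p : X × X) (g : G) ↦ g • p.1 = p.2)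
      (fun p hp ↦ ?_) fun g _ ↦ Finset.card_le_one.2 fun p hp p' hp' ↦ ?_
    · rw [Finset.mem_product] at hp
      rw [← natCard_smul_eq_of_mem_orbit (hC hp.1) (hN hp.2), Nat.card_eq_fintype_card,
        Fintype.card_subtype, Finset.bipartiteAbove]
    · simp only [Finset.mem_bipartiteBelow, Finset.mem_product] at hp hp'
      have h_fst : p.1 = p'.1 :=
        h_one g _ hp.1.1 _ hp'.1.1 (hp.2 ▸ hp.1.2) (hp'.2 ▸ hp'.1.2)
      exact Prod.ext h_fst (by rw [← hp.2, ← hp'.2, h_fst])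
  rw [Finset.card_product, Finset.card_univ, mul_one, ← Nat.card_eq_fintype_card, ← h_orbit]
    at h_count
  rw [Set.ncard_coe_finset, Set.ncard_coe_finset]
  exact Nat.le_of_mul_le_mul_right h_count Nat.card_pos

end CliqueCoclique

section ErdosKoRado

variable {K W : Type*} [Field K] [AddCommGroup W] [Module K W]

theorem exists_spread [Finite K] [FiniteDimensional K W] {d t : ℕ} (ht : t ≠ 0)
    (hW : finrank K W = d * t) :
    ∃ S : Set (Submodule K W), S.ncard = ∑ i ∈ Finset.range d, (Nat.card K ^ t) ^ i ∧
      (∀ T ∈ S, finrank K T = t) ∧ S.PairwiseDisjoint id := by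
  obtain ⟨p, _⟩ := CharP.exists K
  have : Fact p.Prime := ⟨CharP.char_is_prime K p⟩
  have : NeZero t := ⟨ht⟩
  let E := FiniteField.Extension K p t
  have hE : finrank K E = t := FiniteField.finrank_extension K p t
  let φ : (Fin d → E) ≃ₗ[K] W := LinearEquiv.ofFinrankEq _ _ <| by
    rw [finrank_pi_fintype, Finset.sum_const, hE, hW, Finset.card_univ, Fintype.card_fin,
      smul_eq_mul]
  let line (v : ℙ E (Fin d → E)) : Submodule K W :=
    (v.submodule.restrictScalars K).map (φ : (Fin d → E) →ₗ[K] W)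
  have h_line : Function.Injective line :=
    (map_injective_of_injective φ.injective).comp <|
      (restrictScalars_injective K E _).comp Projectivization.submodule_injective
  refine ⟨Set.range line, ?_, ?_, ?_⟩
  · rw [← Nat.card_coe_set_eq, Nat.card_range_of_injective h_line,
      Projectivization.card_of_finrank E _ (finrank_fin_fun E), FiniteField.natCard_extension]
  · rintro _ ⟨v, rfl⟩
    have h_tower : finrank K E * finrank E v.submodule = finrank K v.submodule :=
      finrank_mul_finrank K E v.submodule
    rw [v.finrank_submodule, hE, mul_one] at h_tower
    exact (LinearEquiv.finrank_map_eq φ _).trans h_tower.symm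
  · rintro _ ⟨v, rfl⟩ _ ⟨w, rfl⟩ hvw
    have h_disj : Disjoint v.submodule w.submodule :=
      (isAtom_iff_finrank_eq_one.2 v.finrank_submodule).disjoint_of_ne
        (isAtom_iff_finrank_eq_one.2 w.finrank_submodule)
        (Projectivization.submodule_injective.ne (ne_of_apply_ne line hvw))
    refine disjoint_map φ.injective (disjoint_iff.2 ?_)
    rw [← restrictScalars_inf, h_disj.eq_bot, restrictScalars_bot]

theorem orbit_linearEquiv_eq [FiniteDimensional K W] (A : Submodule K W) :
    MulAction.orbit (W ≃ₗ[K] W) A = {T : Submodule K W | finrank K T = finrank K A} := by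
  ext T
  refine ⟨?_, fun hT ↦ ?_⟩
  · rintro ⟨g, rfl⟩
    exact LinearEquiv.finrank_map_eq g A
  · obtain ⟨g, hg⟩ := exists_linearEquiv_restrict_eq (LinearEquiv.ofFinrankEq A T hT.symm)
    refine ⟨g, eq_of_le_of_finrank_eq ?_ ((LinearEquiv.finrank_map_eq g A).trans hT.symm)⟩
    rintro _ ⟨x, hx, rfl⟩
    exact hg ⟨x, hx⟩ ▸ Subtype.prop _

theorem ncard_mul_ncard_le_of_pairwiseDisjoint_of_intersecting [Finite K] [FiniteDimensional K W]
    {t : ℕ} {S N : Set (Submodule K W)}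
    (hS : S.PairwiseDisjoint id) (hN : N.Intersecting)
    (hSt : ∀ T ∈ S, finrank K T = t) (hNt : ∀ T ∈ N, finrank K T = t) :
    S.ncard * N.ncard ≤ {T : Submodule K W | finrank K T = t}.ncard := by
  have : Finite W := Module.finite_of_finite K
  have : Finite (W ≃ₗ[K] W) := DFunLike.finite _
  obtain rfl | ⟨A, hA⟩ := S.eq_empty_or_nonempty
  · simp
  have h_orbit : MulAction.orbit (W ≃ₗ[K] W) A = {T : Submodule K W | finrank K T = t} := by
    rw [orbit_linearEquiv_eq, hSt A hA]
  rw [← h_orbit]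
  refine ncard_mul_ncard_le_of_subset_orbit (h_orbit ▸ hSt) (h_orbit ▸ hNt)
    fun g T hT T' hT' hgT hgT' ↦ hS.elim hT hT' fun h_disj ↦ hN hgT hgT' ?_
  exact disjoint_map g.injective h_disj

theorem ncard_le_gaussQ_of_intersecting [Finite K] [FiniteDimensional K W] {d t : ℕ} (ht : t ≠ 0)
    (hd : d ≠ 0) (hW : finrank K W = d * t) {N : Set (Submodule K W)}
    (hNt : ∀ T ∈ N, finrank K T = t) (hN : N.Intersecting) :
    (N.ncard : ℚ) ≤ GaussQ (Nat.card K) (d * t - 1) (t - 1) := by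
  have hq : (1 : ℚ) < (Nat.card K : ℚ) ^ t :=
    one_lt_pow₀ (by exact_mod_cast Finite.one_lt_card) ht
  obtain ⟨S, hS_card, hS_finrank, hS⟩ := exists_spread ht hW
  have h_le : ((∑ i ∈ Finset.range d, ((Nat.card K : ℚ) ^ t) ^ i) * N.ncard) ≤
      GaussQ (Nat.card K) (d * t) t := by
    rw [← hW, ← ncard_setOf_finrank_eq (hW ▸ Nat.le_mul_of_pos_left t (Nat.pos_of_ne_zero hd))]
    exact_mod_cast hS_card ▸
      ncard_mul_ncard_le_of_pairwiseDisjoint_of_intersecting hS hN hS_finrank hNt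
  rw [gaussQ_eq_div_mul_pred_pred (mul_ne_zero hd ht) ht, mul_comm d, pow_mul,
    ← geom_sum_eq hq.ne'] at h_le
  rw [mul_comm d]
  exact le_of_mul_le_mul_left h_le (geom_sum_pos (by positivity) hd)

end ErdosKoRado

section CoverFree

variable {K V : Type*} [Field K] [AddCommGroup V] [Module K V] {F : Set (Submodule K V)}
  {F₀ T : Submodule K V} {k t : ℕ}

/-- The Grassmannian of `k`-dimensional subspaces of `W`, encoded as subspaces of the ambient space
so that it contains `Mset` and `Nset`. -/
def grassmannian (W : Submodule K V) (k : ℕ) : Set (Submodule K V) :=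
  {T | T ≤ W ∧ finrank K T = k}

theorem mem_range_map_subtype {W : Submodule K V} (hT : T ≤ W) : T ∈ Set.range (map W.subtype) :=
  ⟨comap W.subtype T, by rw [map_comap_subtype, inf_eq_right.2 hT]⟩

theorem ncard_preimage_map_subtype {W : Submodule K V} {N : Set (Submodule K V)}
    (hN : ∀ T ∈ N, T ≤ W) : (map W.subtype ⁻¹' N).ncard = N.ncard :=
  Set.ncard_preimage_of_injective_subset_range
    (map_injective_of_injective W.injective_subtype) fun T hT ↦ mem_range_map_subtype (hN T hT)

theorem preimage_map_subtype_grassmannian (W : Submodule K V) :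
    map W.subtype ⁻¹' grassmannian W k = {T : Submodule K W | finrank K T = k} := by
  ext T
  simp only [grassmannian, Set.mem_preimage, Set.mem_ofPred_eq, map_subtype_le, true_and,
    finrank_map_subtype_eq]

theorem ncard_grassmannian [Finite K] (W : Submodule K V) [FiniteDimensional K W]
    (hk : k ≤ finrank K W) :
    ((grassmannian W k).ncard : ℚ) = GaussQ (Nat.card K) (finrank K W) k := by
  rw [← ncard_setOf_finrank_eq hk, ← preimage_map_subtype_grassmannian,
    ncard_preimage_map_subtype fun T hT ↦ hT.1]

theorem finite_grassmannian [Finite K] (W : Submodule K V) [FiniteDimensional K W] :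
    (grassmannian W k).Finite := by
  have : Finite W := Module.finite_of_finite K
  exact (Set.finite_range (map W.subtype)).subset fun T hT ↦ mem_range_map_subtype hT.1

theorem Mset_subset_grassmannian : Mset F t F₀ ⊆ grassmannian F₀ t :=
  fun _ hT ↦ ⟨hT.1, hT.2.1⟩

-- Since `ncard` is `0` on infinite sets, `Nset` omits a subspace lying in infinitely many members.
theorem Nset_subset_grassmannian_diff_Mset : Nset F t F₀ ⊆ grassmannian F₀ t \ Mset F t F₀ :=
  fun _ hT ↦ ⟨⟨hT.1, hT.2.1⟩, fun hM ↦ hT.2.2.ne' hM.2.2⟩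

theorem exists_ne_mem_of_mem_grassmannian_diff_Mset (hF₀ : F₀ ∈ F)
    (hT : T ∈ grassmannian F₀ t \ Mset F t F₀) : ∃ G ∈ F, G ≠ F₀ ∧ T ≤ G := by
  by_contra! h
  have h_only : {G ∈ F | T ≤ G} = {F₀} :=
    Set.eq_singleton_iff_unique_mem.2
      ⟨⟨hF₀, hT.1.1⟩, fun G hG ↦ by_contra fun hne ↦ h G hG.1 hne hG.2⟩
  exact hT.2 ⟨hT.1.1, hT.1.2, by rw [h_only, Set.ncard_singleton]⟩

theorem sup_eq_of_disjoint_of_mem_grassmannian [FiniteDimensional K F₀]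
    (hdim : finrank K F₀ = 2 * t) {A B : Submodule K V} (hA : A ∈ grassmannian F₀ t)
    (hB : B ∈ grassmannian F₀ t) (hAB : Disjoint A B) : A ⊔ B = F₀ := by
  have : FiniteDimensional K A := finiteDimensional_of_le hA.1
  have : FiniteDimensional K B := finiteDimensional_of_le hB.1
  refine eq_of_le_of_finrank_eq (sup_le hA.1 hB.1) ?_
  have h_add := finrank_sup_add_finrank_inf_eq A B
  rw [hAB.eq_bot, finrank_bot, hA.2, hB.2] at h_add
  omega

theorem IsCoverFree.intersecting_grassmannian_diff_Mset [FiniteDimensional K F₀]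
    (hF : IsCoverFree F) (hF₀ : Maximal (· ∈ F) F₀) (hdim : finrank K F₀ = 2 * t) :
    (grassmannian F₀ t \ Mset F t F₀).Intersecting := by
  intro A hA B hB hAB
  have h_sup : A ⊔ B = F₀ := sup_eq_of_disjoint_of_mem_grassmannian hdim hA.1 hB.1 hAB
  obtain ⟨G, hG, hGF₀, hAG⟩ := exists_ne_mem_of_mem_grassmannian_diff_Mset hF₀.prop hA
  obtain ⟨H, hH, hHF₀, hBH⟩ := exists_ne_mem_of_mem_grassmannian_diff_Mset hF₀.prop hB
  obtain rfl | hGH := eq_or_ne G H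
  · exact hGF₀ (hF₀.eq_of_ge hG (h_sup ▸ sup_le hAG hBH))
  · refine hF ⟨F₀, G, H, hF₀.prop, hG, hH, hGF₀.symm, hHF₀.symm, hGH, ?_⟩
    calc F₀ = A ⊔ B := h_sup.symm
      _ ≤ (F₀ ⊓ G) ⊔ (F₀ ⊓ H) := sup_le_sup (le_inf hA.1.1 hAG) (le_inf hB.1.1 hBH)

theorem IsCoverFree.ncard_grassmannian_diff_Mset_le [Finite K] (hF : IsCoverFree F) (ht : t ≠ 0)
    (hF₀ : Maximal (· ∈ F) F₀) (hdim : finrank K F₀ = 2 * t) :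
    ((grassmannian F₀ t \ Mset F t F₀).ncard : ℚ) ≤ GaussQ (Nat.card K) (2 * t - 1) (t - 1) := by
  have : FiniteDimensional K F₀ := finite_of_finrank_pos (by omega)
  rw [← ncard_preimage_map_subtype fun T hT ↦ hT.1.1]
  refine ncard_le_gaussQ_of_intersecting ht two_ne_zero hdim
    (fun T hT ↦ (finrank_map_subtype_eq F₀ T).symm.trans hT.1.2) fun A hA B hB hAB ↦ ?_
  exact hF.intersecting_grassmannian_diff_Mset hF₀ hdim hA hB
    (disjoint_map F₀.injective_subtype hAB)

theorem ncard_Mset_add_ncard_grassmannian_diff_Mset [Finite K] (ht : t ≠ 0)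
    (hdim : finrank K F₀ = 2 * t) :
    ((Mset F t F₀).ncard : ℚ) + (grassmannian F₀ t \ Mset F t F₀).ncard =
      (Nat.card K : ℚ) ^ t * GaussQ (Nat.card K) (2 * t - 1) t +
        GaussQ (Nat.card K) (2 * t - 1) (t - 1) := by
  have : FiniteDimensional K F₀ := finite_of_finrank_pos (by omega)
  rw [← gaussQ_pascal Finite.one_lt_card ht (by omega), ← hdim,
    ← ncard_grassmannian F₀ (by omega), add_comm,
    ← Set.ncard_sdiff_add_ncard_of_subset Mset_subset_grassmannian (finite_grassmannian F₀),
    Nat.cast_add]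

end CoverFree

theorem stmt11_general {K V : Type*} [Field K] [Finite K] [AddCommGroup V] [Module K V] {q t : ℕ}
    (hK : Nat.card K = q) (ht : 1 ≤ t) {F : Set (Submodule K V)} (hcf : IsCoverFree F)
    {F₀ : Submodule K V} (hF₀ : Maximal (· ∈ F) F₀) (hdim : finrank K F₀ = 2 * t) :
    ((q : ℚ) ^ t * GaussQ q (2 * t - 1) t ≤ ((Mset F t F₀).ncard : ℚ)) ∧
    (((Nset F t F₀).ncard : ℚ) ≤ GaussQ q (2 * t - 1) (t - 1)) ∧
    ((((Mset F t F₀).ncard : ℚ) = (q : ℚ) ^ t * GaussQ q (2 * t - 1) t ∧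
        ((Nset F t F₀).ncard : ℚ) = GaussQ q (2 * t - 1) (t - 1)) ↔
      ((∀ A ∈ Nset F t F₀, ∀ B ∈ Nset F t F₀, A ⊓ B ≠ ⊥) ∧
        ((Nset F t F₀).ncard : ℚ) = GaussQ q (2 * t - 1) (t - 1))) := by
  subst hK
  have ht' : t ≠ 0 := Nat.ne_of_gt ht
  have : FiniteDimensional K F₀ := finite_of_finrank_pos (by omega)
  have h_int : (Nset F t F₀).Intersecting :=
    (hcf.intersecting_grassmannian_diff_Mset hF₀ hdim).mono Nset_subset_grassmannian_diff_Mset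
  have h_diff_le := hcf.ncard_grassmannian_diff_Mset_le ht' hF₀ hdim
  have h_total := ncard_Mset_add_ncard_grassmannian_diff_Mset (F := F) ht' hdim
  have h_N_le : ((Nset F t F₀).ncard : ℚ) ≤ (grassmannian F₀ t \ Mset F t F₀).ncard := by
    exact_mod_cast Set.ncard_le_ncard Nset_subset_grassmannian_diff_Mset
      (finite_grassmannian F₀).sdiff
  refine ⟨by linarith, h_N_le.trans h_diff_le, fun h ↦ ⟨fun A hA B hB hAB ↦ ?_, h.2⟩,
    fun h ↦ ⟨by linarith [h.2], h.2⟩⟩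
  exact h_int hA hB (disjoint_iff.2 hAB)

theorem stmt11 (q n t : ℕ) (K : Type*) [Field K] [Fintype K] (hK : Fintype.card K = q)
    (V : Type*) [AddCommGroup V] [Module K V] [FiniteDimensional K V]
    (hV : Module.finrank K V = n) (ht : 1 ≤ t) (hn : 2 * t + 1 ≤ n)
    (F : Set (Submodule K V)) (hdim : ∀ A ∈ F, Module.finrank K A = 2 * t)
    (hcf : IsCoverFree F)
    (F₀ : Submodule K V) (hF₀ : F₀ ∈ F) :
    ((q : ℚ) ^ t * GaussQ q (2 * t - 1) t ≤ ((Mset F t F₀).ncard : ℚ)) ∧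
    (((Nset F t F₀).ncard : ℚ) ≤ GaussQ q (2 * t - 1) (t - 1)) ∧
    ((((Mset F t F₀).ncard : ℚ) = (q : ℚ) ^ t * GaussQ q (2 * t - 1) t ∧
        ((Nset F t F₀).ncard : ℚ) = GaussQ q (2 * t - 1) (t - 1)) ↔
      ((∀ A ∈ Nset F t F₀, ∀ B ∈ Nset F t F₀, A ⊓ B ≠ ⊥) ∧
        ((Nset F t F₀).ncard : ℚ) = GaussQ q (2 * t - 1) (t - 1))) := by
  exact stmt11_general (Nat.card_eq_fintype_card.trans hK) ht hcf
    ⟨hF₀, fun G hG h ↦ (eq_of_le_of_finrank_eq h ((hdim F₀ hF₀).trans (hdim G hG).symm)).ge⟩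
    (hdim F₀ hF₀)
end

section
/- Let V be an n-dimensional vector space over the finite field 𝔽_q with n ≥ 2t+1 and t ≥ 2, let F be a cover-free family of 2t-dimensional subspaces of V, and set t₀ = min{[t choose 1]_q, q^{3t-n-1}[n-2t+1 choose 1]_q} (a rational number). Then for any two t-dimensional subspaces A and T of V, and any fixed (n-t)-dimensional subspace R with R ⊕ T = V, the number of F ∈ F_T with A ∈ A(F, T) is at most t₀. -/
/-- The family `𝒜(F₀, T)`: all `t`-dimensional subspaces `A` of `V` with
`dim (A ∩ T) = 0`, `dim (A ∩ F₀) = t - 1`, such that there is a one-dimensional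
subspace `E` of `F₀ ∩ R` with `|F_{T ⊕ E}| > 1` and `F₀ = T ⊕ E ⊕ (A ∩ F₀)`. -/
def FamA {K V : Type*} [Field K] [AddCommGroup V] [Module K V]
    (F : Set (Submodule K V)) (t : ℕ) (F₀ T R : Submodule K V) :
    Set (Submodule K V) :=
  {A | Module.finrank K A = t ∧ A ⊓ T = ⊥ ∧ Module.finrank K ↥(A ⊓ F₀) = t - 1 ∧
    ∃ E : Submodule K V, E ≤ F₀ ⊓ R ∧ Module.finrank K E = 1 ∧
      1 < {G ∈ F | T ⊔ E ≤ G}.ncard ∧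
      T ⊓ E = ⊥ ∧ (T ⊔ E) ⊓ (A ⊓ F₀) = ⊥ ∧ T ⊔ E ⊔ (A ⊓ F₀) = F₀}

/-!
Let `A ∈ 𝒜(G, T)` with `G ∈ F_T`. Some `G' ∈ F` other than `G` contains `T ⊕ E`, hence
`G = (G ∩ G') + (A ∩ G)`, and cover-freeness lets no other member of `F` contain `A ∩ G`. So `G` is
determined by the hyperplane `A ∩ G` of `A`, which leaves at most `[t choose 1]` possibilities.

For the second bound with `k = dim G`, note that `A + T` is a hyperplane of `A + G` of dimension
`k`, so there are at most `[n-k choose 1]` candidates for `A + G`. Each candidate `U` has at most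
`q + 1` members of `F` as hyperplanes: by cover-freeness, any two of them meet in the same subspace
of codimension `2` in `U`. If `k + t - n - 1 ≥ 1`, then `(q + 1) [n-k choose 1]` is at most
`q ^ (k+t-n-1) [n-k+1 choose 1]`, and otherwise the bound `[t choose 1]` is already the smaller one.
-/

open Module

section Counting

lemma ncard_le_mul_ncard_of_mapsTo {α β : Type*} {f : α → β} {s : Set α} {u : Set β}
    (hs : s.Finite) (hu : u.Finite) (hf : Set.MapsTo f s u) {n : ℕ}
    (hfibre : ∀ b ∈ u, {a ∈ s | f a = b}.ncard ≤ n) : s.ncard ≤ n * u.ncard := by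
  classical
  rw [Set.ncard_eq_toFinset_card s hs, Set.ncard_eq_toFinset_card u hu]
  refine Finset.card_le_mul_card_image_of_maps_to (f := f)
    (fun a ha ↦ by simpa using hf (by simpa using ha)) n fun b hb ↦ ?_
  rw [← Set.ncard_coe_finset]
  simpa using hfibre b (by simpa using hb)

variable {K V : Type*} [Field K] [AddCommGroup V] [Module K V]

lemma covBy_iff_finrank_eq_add_one [FiniteDimensional K V] {Y X : Submodule K V} (hYX : Y ≤ X) :
    Y ⋖ X ↔ finrank K X = finrank K Y + 1 := by
  have hdim : finrank K (X ⧸ Y.submoduleOf X) + finrank K Y = finrank K X := by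
    rw [← (Submodule.submoduleOfEquivOfLe hYX).finrank_eq]
    exact Submodule.finrank_quotient_add_finrank _
  rw [covBy_iff_quot_is_simple hYX, isSimpleModule_iff_finrank_eq_one (R := K)]
  change finrank K (X ⧸ Y.submoduleOf X) = 1 ↔ _
  omega

lemma map_subtype_submoduleOf {M X : Submodule K V} (hMX : M ≤ X) :
    (M.submoduleOf X).map X.subtype = M := by
  rw [Submodule.submoduleOf, Submodule.map_comap_subtype, inf_eq_right.2 hMX]

lemma map_subtype_covBy_map_subtype_iff {X : Submodule K V} {M N : Submodule K X} :
    M.map X.subtype ⋖ N.map X.subtype ↔ M ⋖ N := by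
  refine Set.OrdConnected.apply_covBy_apply_iff (Submodule.MapSubtype.orderEmbedding X) ⟨?_⟩
  rintro _ - _ ⟨N, rfl⟩ M hM
  exact ⟨M.submoduleOf X, map_subtype_submoduleOf (hM.2.trans (Submodule.map_subtype_le X N))⟩

lemma ncard_setOf_isAtom [Finite K] :
    {L : Submodule K V | IsAtom L}.ncard = ∑ i ∈ Finset.range (finrank K V), Nat.card K ^ i := by
  simp only [Submodule.isAtom_iff_finrank_eq_one]
  rw [← Projectivization.card_of_finrank K V rfl]
  exact (Nat.card_congr (Projectivization.equivSubmodule K V)).symm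

lemma ncard_setOf_isCoatom [Finite K] [FiniteDimensional K V] :
    {H : Submodule K V | IsCoatom H}.ncard =
      ∑ i ∈ Finset.range (finrank K V), Nat.card K ^ i := by
  rw [← Subspace.dual_finrank_eq, ← ncard_setOf_isAtom]
  exact Nat.card_congr <| Subspace.orderIsoFiniteDimensional.toEquiv.subtypeEquiv
    fun H ↦ (Subspace.orderIsoFiniteDimensional.isCoatom_iff H).symm

lemma ncard_setOf_covBy_left [Finite K] [FiniteDimensional K V] (X : Submodule K V) :
    {H | H ⋖ X}.ncard = ∑ i ∈ Finset.range (finrank K X), Nat.card K ^ i := by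
  have himage : {H | H ⋖ X} = Submodule.map X.subtype '' {H | IsCoatom H} := by
    ext H
    constructor
    · intro hH
      have hmap : (H.submoduleOf X).map X.subtype = H := map_subtype_submoduleOf hH.le
      refine ⟨H.submoduleOf X, ?_, hmap⟩
      rw [Set.mem_ofPred_eq, ← covBy_top_iff, ← map_subtype_covBy_map_subtype_iff, hmap,
        Submodule.map_subtype_top]
      exact hH
    · rintro ⟨H, hH, rfl⟩
      simpa using map_subtype_covBy_map_subtype_iff.2 (covBy_top_iff.2 hH)
  rw [himage, Set.ncard_image_of_injective _
    (Submodule.map_injective_of_injective X.subtype_injective), ncard_setOf_isCoatom]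

lemma ncard_setOf_covBy_right [Finite K] (Y : Submodule K V) :
    {M | Y ⋖ M}.ncard = ∑ i ∈ Finset.range (finrank K (V ⧸ Y)), Nat.card K ^ i := by
  have himage :
      {M | Y ⋖ M} = (fun L ↦ (Y.comapMkQRelIso L : Submodule K V)) '' {L | IsAtom L} := by
    ext M
    constructor
    · intro hM
      refine ⟨Y.comapMkQRelIso.symm ⟨M, hM.le⟩, ?_, by simp⟩
      rw [Set.mem_ofPred_eq, OrderIso.isAtom_iff]
      exact Set.Ici.isAtom_iff.2 hM
    · rintro ⟨L, hL, rfl⟩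
      exact Set.Ici.isAtom_iff.1 ((Y.comapMkQRelIso.isAtom_iff L).2 hL)
  have hinj : Function.Injective fun L ↦ (Y.comapMkQRelIso L : Submodule K V) :=
    Subtype.val_injective.comp Y.comapMkQRelIso.injective
  rw [himage, Set.ncard_image_of_injective _ hinj, ncard_setOf_isAtom]

lemma ncard_setOf_covBy_and_le [Finite K] [FiniteDimensional K V] {Y X : Submodule K V}
    (hYX : Y ≤ X) :
    {M | Y ⋖ M ∧ M ≤ X}.ncard =
      ∑ i ∈ Finset.range (finrank K X - finrank K Y), Nat.card K ^ i := by
  have hY : (Y.submoduleOf X).map X.subtype = Y := map_subtype_submoduleOf hYX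
  have himage : {M | Y ⋖ M ∧ M ≤ X} = Submodule.map X.subtype '' {M | Y.submoduleOf X ⋖ M} := by
    ext M
    constructor
    · rintro ⟨hYM, hMX⟩
      have hM : (M.submoduleOf X).map X.subtype = M := map_subtype_submoduleOf hMX
      refine ⟨M.submoduleOf X, map_subtype_covBy_map_subtype_iff.1 ?_, hM⟩
      rwa [hY, hM]
    · rintro ⟨M, hM, rfl⟩
      exact ⟨hY ▸ map_subtype_covBy_map_subtype_iff.2 hM, Submodule.map_subtype_le X M⟩
  have hdim : finrank K (X ⧸ Y.submoduleOf X) = finrank K X - finrank K Y := by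
    rw [Submodule.finrank_quotient, (Submodule.submoduleOfEquivOfLe hYX).finrank_eq]
  rw [himage, Set.ncard_image_of_injective _
    (Submodule.map_injective_of_injective X.subtype_injective), ncard_setOf_covBy_right, hdim]

end Counting

section CoverFree

variable {K V : Type*} [Field K] [AddCommGroup V] [Module K V] {F : Set (Submodule K V)}

lemma isAntichain_of_finrank_eq [FiniteDimensional K V] {k : ℕ}
    (hdim : ∀ G ∈ F, finrank K G = k) : IsAntichain (· ≤ ·) F := by
  intro G hG H hH hne hle
  exact hne (Submodule.eq_of_le_of_finrank_eq hle ((hdim G hG).trans (hdim H hH).symm))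

/- If `H ≠ G`, then `G`, `G'`, `H` violate cover-freeness unless `H = G'`, in which case `G ≤ H`. -/
lemma IsCoverFree.eq_of_le (hcf : IsCoverFree F) (hanti : IsAntichain (· ≤ ·) F)
    {G G' H B : Submodule K V} (hG : G ∈ F) (hG' : G' ∈ F) (hH : H ∈ F) (hne : G ≠ G')
    (hBG : B ≤ G) (hcover : G ≤ (G ⊓ G') ⊔ B) (hBH : B ≤ H) : G = H := by
  by_contra hGH
  have hcover' : G ≤ (G ⊓ G') ⊔ (G ⊓ H) := hcover.trans (sup_le_sup_left (le_inf hBG hBH) _)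
  rcases eq_or_ne G' H with rfl | hG'H
  · exact hanti hG hH hGH (by simpa using hcover')
  · exact hcf ⟨G, G', H, hG, hG', hH, hne, hGH, hG'H, hcover'⟩

lemma IsCoverFree.inf_le_of_covBy (hcf : IsCoverFree F) {G G' H U : Submodule K V}
    (hG : G ∈ F) (hG' : G' ∈ F) (hH : H ∈ F) (hne : G ≠ G') (hGU : G ⋖ U) (hHU : H ⋖ U) :
    G ⊓ G' ≤ H := by
  rcases eq_or_ne G H with rfl | hGH
  · exact inf_le_left
  rcases eq_or_ne G' H with rfl | hG'H
  · exact inf_le_right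
  have hsup : G ⊔ H = U := hGU.wcovBy.sup_eq hHU.wcovBy hGH
  have hcov : G ⊓ H ⋖ G := inf_covBy_of_covBy_sup_right (hsup ▸ hHU)
  rcases hcov.eq_or_eq (le_sup_right : G ⊓ H ≤ (G ⊓ G') ⊔ (G ⊓ H))
    (sup_le inf_le_left inf_le_left) with heq | heq
  · exact (le_sup_left.trans heq.le).trans inf_le_right
  · exact (hcf ⟨G, G', H, hG, hG', hH, hne, hGH, hG'H, heq.ge⟩).elim

lemma IsCoverFree.ncard_setOf_covBy_le [Finite K] [FiniteDimensional K V] (hcf : IsCoverFree F)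
    (U : Submodule K V) : {G ∈ F | G ⋖ U}.ncard ≤ Nat.card K + 1 := by
  have : Finite V := Module.finite_of_finite K
  rcases Set.subsingleton_or_nontrivial {G ∈ F | G ⋖ U} with
    hsub | ⟨G, ⟨hG, hGU⟩, H, ⟨hH, hHU⟩, hne⟩
  · exact (Set.ncard_le_one_iff_subsingleton.2 hsub).trans (Nat.le_add_left 1 _)
  have hGH : G ⊓ H ⋖ G :=
    inf_covBy_of_covBy_sup_right ((hGU.wcovBy.sup_eq hHU.wcovBy hne).symm ▸ hHU)
  have hdimG := (covBy_iff_finrank_eq_add_one hGH.le).1 hGH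
  have hdimU := (covBy_iff_finrank_eq_add_one hGU.le).1 hGU
  have hsubset : {M ∈ F | M ⋖ U} ⊆ {M | G ⊓ H ⋖ M ∧ M ≤ U} := by
    rintro M ⟨hM, hMU⟩
    have hle : G ⊓ H ≤ M := hcf.inf_le_of_covBy hG hH hM hne hGU hMU
    have hdimM := (covBy_iff_finrank_eq_add_one hMU.le).1 hMU
    exact ⟨(covBy_iff_finrank_eq_add_one hle).2 (by omega), hMU.le⟩
  have hcodim : finrank K U - finrank K ↥(G ⊓ H) = 2 := by omega
  calc {M ∈ F | M ⋖ U}.ncard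
      ≤ {M | G ⊓ H ⋖ M ∧ M ≤ U}.ncard := Set.ncard_le_ncard hsubset
    _ = Nat.card K + 1 := by
      rw [ncard_setOf_covBy_and_le (hGH.le.trans hGU.le), hcodim, geom_sum_two]

end CoverFree

section Fibre

variable {K V : Type*} [Field K] [AddCommGroup V] [Module K V] {F : Set (Submodule K V)}
  {t : ℕ} {A G T R : Submodule K V}

/-- The fibre of `G ↦ 𝒜(G, T)` over `A`: the members `G` of `F_T` with `A ∈ 𝒜(G, T)`. -/
def FamAFibre (F : Set (Submodule K V)) (t : ℕ) (A T R : Submodule K V) : Set (Submodule K V) :=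
  {G ∈ F | T ≤ G ∧ A ∈ FamA F t G T R}

lemma exists_ne_le_inf_sup_inf_of_mem_famA (h : A ∈ FamA F t G T R) :
    ∃ G' ∈ F, G' ≠ G ∧ G ≤ (G ⊓ G') ⊔ (A ⊓ G) := by
  obtain ⟨-, -, -, E, -, -, hcard, -, -, hsum⟩ := h
  obtain ⟨G', ⟨hG', hTE⟩, hne⟩ := Set.exists_ne_of_one_lt_ncard hcard G
  refine ⟨G', hG', hne, ?_⟩
  calc G = T ⊔ E ⊔ (A ⊓ G) := hsum.symm
    _ ≤ (G ⊓ G') ⊔ (A ⊓ G) := sup_le_sup_right (le_inf (le_sup_left.trans hsum.le) hTE) _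

lemma inf_covBy_of_mem_famA [FiniteDimensional K V] (ht : 0 < t) (h : A ∈ FamA F t G T R) :
    A ⊓ G ⋖ A := by
  obtain ⟨hA, -, hAG, -⟩ := h
  exact (covBy_iff_finrank_eq_add_one inf_le_left).2 (by omega)

lemma covBy_sup_of_mem_famA [FiniteDimensional K V] (ht : 0 < t) (h : A ∈ FamA F t G T R) :
    G ⋖ A ⊔ G :=
  covBy_sup_of_inf_covBy_left (inf_covBy_of_mem_famA ht h)

lemma sup_covBy_sup_of_mem_famA (h : A ∈ FamA F t G T R) : A ⊔ T ⋖ A ⊔ G := by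
  obtain ⟨-, -, -, E, -, hE, -, hTE, hTEA, hsum⟩ := h
  have hTG : T ≤ G := (le_sup_left.trans le_sup_left).trans hsum.le
  have hatom : ⊥ ⋖ E := bot_covBy_iff.2 (Submodule.isAtom_iff_finrank_eq_one.2 hE)
  have hdisj : Disjoint ((A ⊓ G) ⊔ T) E :=
    (disjoint_iff.2 hTE).disjoint_sup_left_of_disjoint_sup_right (disjoint_iff.2 hTEA).symm
  have hcov : (A ⊓ G) ⊔ T ⋖ (A ⊓ G) ⊔ T ⊔ E :=
    covBy_sup_of_inf_covBy_right (hdisj.eq_bot.symm ▸ hatom)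
  have hG : (A ⊓ G) ⊔ T ⊔ E = G := by rw [sup_assoc, sup_comm, hsum]
  have hinf : (A ⊔ T) ⊓ G = (A ⊓ G) ⊔ T := by
    rw [sup_comm, sup_inf_assoc_of_le A hTG, sup_comm]
  rw [hG, ← hinf] at hcov
  have hsup : A ⊔ T ⊔ G = A ⊔ G := by rw [sup_assoc, sup_eq_right.2 hTG]
  exact hsup ▸ covBy_sup_of_inf_covBy_right hcov

lemma finrank_sup_of_mem_famA [FiniteDimensional K V] (ht : 0 < t) (h : A ∈ FamA F t G T R) :
    finrank K ↥(A ⊔ T) = finrank K G := by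
  have hT := sup_covBy_sup_of_mem_famA h
  have hG := covBy_sup_of_mem_famA ht h
  rw [covBy_iff_finrank_eq_add_one hT.le] at hT
  rw [covBy_iff_finrank_eq_add_one hG.le] at hG
  omega

lemma IsCoverFree.injOn_inf_famAFibre (hcf : IsCoverFree F) (hanti : IsAntichain (· ≤ ·) F) :
    Set.InjOn (A ⊓ ·) (FamAFibre F t A T R) := by
  rintro G ⟨hG, -, hAG⟩ H ⟨hH, -⟩ (heq : A ⊓ G = A ⊓ H)
  obtain ⟨G', hG', hne, hcover⟩ := exists_ne_le_inf_sup_inf_of_mem_famA hAG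
  exact hcf.eq_of_le hanti hG hG' hH hne.symm inf_le_right hcover (heq.trans_le inf_le_right)

lemma IsCoverFree.ncard_famAFibre_le_geom_sum [Finite K] [FiniteDimensional K V]
    (hcf : IsCoverFree F) (hanti : IsAntichain (· ≤ ·) F) (ht : 0 < t) :
    (FamAFibre F t A T R).ncard ≤ ∑ i ∈ Finset.range (finrank K A), Nat.card K ^ i := by
  have : Finite V := Module.finite_of_finite K
  rw [← ncard_setOf_covBy_left]
  exact Set.ncard_le_ncard_of_injOn _ (fun G hG ↦ inf_covBy_of_mem_famA ht hG.2.2)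
    (hcf.injOn_inf_famAFibre hanti)

lemma IsCoverFree.ncard_famAFibre_le_add_one_mul_geom_sum [Finite K] [FiniteDimensional K V]
    (hcf : IsCoverFree F) (ht : 0 < t) :
    (FamAFibre F t A T R).ncard ≤
      (Nat.card K + 1) * ∑ i ∈ Finset.range (finrank K (V ⧸ (A ⊔ T))), Nat.card K ^ i := by
  have : Finite V := Module.finite_of_finite K
  have hcov : Set.MapsTo (A ⊔ ·) (FamAFibre F t A T R) {U | A ⊔ T ⋖ U} :=
    fun G hG ↦ sup_covBy_sup_of_mem_famA hG.2.2
  have hfibre (U : Submodule K V) :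
      {G ∈ FamAFibre F t A T R | A ⊔ G = U}.ncard ≤ Nat.card K + 1 := by
    refine (Set.ncard_le_ncard ?_).trans (hcf.ncard_setOf_covBy_le U)
    rintro G ⟨hG, rfl⟩
    exact ⟨hG.1, covBy_sup_of_mem_famA ht hG.2.2⟩
  rw [← ncard_setOf_covBy_right]
  exact ncard_le_mul_ncard_of_mapsTo (Set.toFinite _) (Set.toFinite _) hcov fun U _ ↦ hfibre U

end Fibre

section GaussianBinomial

variable {q : ℕ}

lemma gaussQ_one_right (hq : 1 < q) (m : ℕ) :
    GaussQ q m 1 = ∑ i ∈ Finset.range m, (q : ℚ) ^ i := by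
  have hq' : (q : ℚ) ≠ 1 := by exact_mod_cast hq.ne'
  simp [GaussQ, geom_sum_eq hq']

lemma gaussQ_one_right_le_zpow_mul (hq : 1 < q) {t m : ℕ} (htm : t ≤ m) :
    GaussQ q t 1 ≤ (q : ℚ) ^ ((t : ℤ) - m) * GaussQ q m 1 := by
  obtain ⟨j, rfl⟩ := Nat.exists_eq_add_of_le' htm
  have hq₀ : (0 : ℚ) < q := by exact_mod_cast hq.pos
  have hexp : (t : ℤ) - (j + t : ℕ) = -(j : ℤ) := by push_cast; ring
  rw [hexp, zpow_neg, zpow_natCast, le_inv_mul_iff₀ (pow_pos hq₀ j), gaussQ_one_right hq,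
    gaussQ_one_right hq, Finset.sum_range_add, Finset.mul_sum]
  simp only [← pow_add]
  exact le_add_of_nonneg_left (Finset.sum_nonneg fun i _ ↦ by positivity)

lemma add_one_mul_gaussQ_one_right_le_zpow_mul (hq : 1 < q) {m : ℕ} {e : ℤ} (he : 1 ≤ e) :
    (q + 1) * GaussQ q m 1 ≤ (q : ℚ) ^ e * GaussQ q (m + 1) 1 := by
  have hq₂ : (2 : ℚ) ≤ q := by exact_mod_cast hq
  have hpow : (q : ℚ) ≤ (q : ℚ) ^ e := by
    simpa only [zpow_one] using zpow_le_zpow_right₀ (by linarith : (1 : ℚ) ≤ q) he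
  rw [gaussQ_one_right hq, gaussQ_one_right hq, geom_sum_succ]
  set s : ℚ := ∑ i ∈ Finset.range m, (q : ℚ) ^ i
  have hs : 0 ≤ s := Finset.sum_nonneg fun i _ ↦ by positivity
  have hsq : (q : ℚ) + 1 ≤ q * q := by nlinarith
  calc (q + 1) * s ≤ q * q * s := by gcongr
    _ ≤ q * (q * s + 1) := by linarith
    _ ≤ (q : ℚ) ^ e * (q * s + 1) := by gcongr

end GaussianBinomial

theorem stmt12_general {K V : Type*} [Field K] [Finite K] [AddCommGroup V] [Module K V]
    [FiniteDimensional K V] {F : Set (Submodule K V)} {k t : ℕ} (hk : k ≤ finrank K V)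
    (ht : 0 < t) (hdim : ∀ G ∈ F, finrank K G = k) (hcf : IsCoverFree F)
    (A T R : Submodule K V) :
    ({G ∈ F | T ≤ G ∧ A ∈ FamA F t G T R}.ncard : ℚ) ≤
      min (GaussQ (Nat.card K) t 1)
        ((Nat.card K : ℚ) ^ ((k + t : ℤ) - finrank K V - 1) *
          GaussQ (Nat.card K) (finrank K V - k + 1) 1) := by
  have hq : 1 < Nat.card K := Finite.one_lt_card
  change ((FamAFibre F t A T R).ncard : ℚ) ≤ _
  rcases (FamAFibre F t A T R).eq_empty_or_nonempty with hempty | ⟨G, hG⟩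
  · simp only [hempty, Set.ncard_empty, Nat.cast_zero, gaussQ_one_right hq]
    positivity
  have hA : finrank K A = t := hG.2.2.1
  have hfirst : ((FamAFibre F t A T R).ncard : ℚ) ≤ GaussQ (Nat.card K) t 1 := by
    have hgeom := hcf.ncard_famAFibre_le_geom_sum (A := A) (T := T) (R := R)
      (isAntichain_of_finrank_eq hdim) ht
    rw [hA] at hgeom
    rw [gaussQ_one_right hq]
    exact_mod_cast hgeom
  refine le_min hfirst ?_
  rcases le_or_gt t (finrank K V - k + 1) with hle | hlt
  · refine (hfirst.trans (gaussQ_one_right_le_zpow_mul hq hle)).trans_eq ?_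
    congr 2
    push_cast [hk]
    ring
  have hquot : finrank K (V ⧸ (A ⊔ T)) = finrank K V - k := by
    rw [Submodule.finrank_quotient, finrank_sup_of_mem_famA ht hG.2.2, hdim G hG.1]
  calc ((FamAFibre F t A T R).ncard : ℚ)
      ≤ (Nat.card K + 1) * GaussQ (Nat.card K) (finrank K V - k) 1 := by
        rw [gaussQ_one_right hq, ← hquot]
        exact_mod_cast hcf.ncard_famAFibre_le_add_one_mul_geom_sum ht
    _ ≤ _ := add_one_mul_gaussQ_one_right_le_zpow_mul hq (by omega)

theorem stmt12 (q n t : ℕ) (K : Type*) [Field K] [Fintype K] (hK : Fintype.card K = q)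
    (V : Type*) [AddCommGroup V] [Module K V] [FiniteDimensional K V]
    (hV : Module.finrank K V = n) (ht : 2 ≤ t) (hn : 2 * t + 1 ≤ n)
    (F : Set (Submodule K V)) (hdim : ∀ A ∈ F, Module.finrank K A = 2 * t)
    (hcf : IsCoverFree F)
    (A T : Submodule K V) (hA : Module.finrank K A = t) (hT : Module.finrank K T = t)
    (R : Submodule K V) (hR : Module.finrank K R = n - t)
    (hRT : R ⊓ T = ⊥) (hRTsum : R ⊔ T = ⊤) :
    ({G ∈ F | T ≤ G ∧ A ∈ FamA F t G T R}.ncard : ℚ) ≤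
      min (GaussQ q t 1) ((q : ℚ) ^ ((3 * t : ℤ) - n - 1) * GaussQ q (n - 2 * t + 1) 1) := by
  subst hK hV
  rw [Fintype.card_eq_nat_card]
  convert stmt12_general (t := t) (by omega) (by omega) hdim hcf A T R using 4
  push_cast
  ring
end

section
/- Let V be an n-dimensional vector space over the finite field 𝔽_q with n ≥ 2t+1 and t ≥ 2, let F be a cover-free family of 2t-dimensional subspaces of V, let T be a t-dimensional subspace of V, and fix an (n-t)-dimensional subspace R with R ⊕ T = V. Then Σ_{F ∈ F_T} |A(F, T)| ≥ q^{t²+1} [n-2t choose 1]_q ([t choose 1]_q |F_T| - [n-t choose 1]_q). -/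
open Module Submodule

/-!
Call a nonzero vector `e ∈ G ⊓ R` shared if at least two members of `F` contain `T ⊔ ⟨e⟩`. A
nonzero vector of `R` that is not shared lies in at most one member of `F` above `T`, which bounds
the total number of shared vectors from below. For a shared `e` in `G`, each complement `B` of
`T ⊔ ⟨e⟩` in `G` and each `v ∉ G` give a member `B ⊔ ⟨v⟩` of `𝒜(G, T)`. Conversely, a member `A`
arises from at most `|(G ⊓ R) \ (T ⊔ A ⊓ G)| * |A \ G|` pairs `(e, v)`, and double counting
bounds `|𝒜(G, T)|` below by the number of shared vectors of `G ⊓ R`.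
-/

section Complements

variable {R E : Type*} [Ring R] [AddCommGroup E] [Module R E] {p c : Submodule R E}

/-- The complements of `p` form a torsor under `Hom(E ⧸ p, p)`; this is its trivialization at the
complement `c`, used to count complements. A complement is encoded by the difference between the
projection onto `p` along it and the projection along `c`. -/
noncomputable def isComplEquivQuotientHom (h : IsCompl p c) :
    {s : Submodule R E // IsCompl p s} ≃ (E ⧸ p →ₗ[R] p) :=
  p.isComplEquivProj.trans
    { toFun := fun f => p.liftQ (f.1 - p.projectionOnto c h) fun x hx => by
        simpa [sub_eq_zero, projectionOnto_apply_left h ⟨x, hx⟩] using f.2 ⟨x, hx⟩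
      invFun := fun g => ⟨p.projectionOnto c h + g ∘ₗ p.mkQ, fun x => by
        simp [(Submodule.Quotient.mk_eq_zero p).2 x.2]⟩
      left_inv := fun f => Subtype.ext (by simp [liftQ_mkQ])
      right_inv := fun g => linearMap_qext p (by simp [liftQ_mkQ]) }

end Complements

section Counting

variable {K V : Type*} [Field K] [AddCommGroup V] [Module K V] [FiniteDimensional K V]

theorem natCard_isCompl (p : Submodule K V) :
    Nat.card {s : Submodule K V // IsCompl p s} =
      Nat.card K ^ (finrank K p * (finrank K V - finrank K p)) := by
  obtain ⟨c, hc⟩ := p.exists_isCompl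
  rw [Nat.card_congr (isComplEquivQuotientHom hc), natCard_eq_pow_finrank (K := K),
    finrank_linearMap, finrank_quotient, mul_comm]

theorem ncard_relative_complements {P G : Submodule K V} (hPG : P ≤ G) :
    {B : Submodule K V | Disjoint P B ∧ P ⊔ B = G}.ncard =
      Nat.card K ^ (finrank K P * (finrank K G - finrank K P)) := by
  have map_submoduleOf : (P.submoduleOf G).map G.subtype = P := by
    rw [submoduleOf, map_comap_subtype, inf_eq_right.2 hPG]
  have isCompl_iff (s : Submodule K G) : IsCompl (P.submoduleOf G) s ↔
      Disjoint P (s.map G.subtype) ∧ P ⊔ s.map G.subtype = G := by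
    rw [G.mapIic.isCompl_iff, Set.Iic.isCompl_iff, coe_mapIic_apply, coe_mapIic_apply,
      map_submoduleOf]
  have image_eq : {B : Submodule K V | Disjoint P B ∧ P ⊔ B = G} =
      map G.subtype '' {s | IsCompl (P.submoduleOf G) s} := by
    ext B
    constructor
    · rintro ⟨hdisj, hsup⟩
      have hB : (B.submoduleOf G).map G.subtype = B := by
        rw [submoduleOf, map_comap_subtype, inf_eq_right.2 (hsup ▸ le_sup_right)]
      exact ⟨B.submoduleOf G, (isCompl_iff _).2 (by rw [hB]; exact ⟨hdisj, hsup⟩), hB⟩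
    · rintro ⟨s, hs, rfl⟩
      exact (isCompl_iff s).1 hs
  rw [image_eq, Set.ncard_image_of_injective _ (map_injective_of_injective G.injective_subtype),
    ← Nat.card_coe_set_eq, Set.coe_ofPred, natCard_isCompl,
    (submoduleOfEquivOfLe hPG).finrank_eq]

theorem ncard_coe_submodule (A : Submodule K V) :
    (A : Set V).ncard = Nat.card K ^ finrank K A := by
  rw [← Nat.card_coe_set_eq]
  exact natCard_eq_pow_finrank (K := K) (V := A)

theorem ncard_coe_sdiff_coe [Finite K] {A B : Submodule K V} {b c : ℕ}
    (hb : finrank K ↥(A ⊓ B) = b) (hA : finrank K A = b + c) :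
    ((A : Set V) \ B).ncard = Nat.card K ^ b * (Nat.card K ^ c - 1) := by
  have : Finite V := Module.finite_of_finite K
  rw [← Set.sdiff_inter_self_eq_sdiff, Set.inter_comm, ← coe_inf,
    Set.ncard_sdiff (SetLike.coe_subset_coe.2 inf_le_left), ncard_coe_submodule,
    ncard_coe_submodule, hA, hb, pow_add, Nat.mul_sub_one]

theorem ncard_coe_sdiff_zero [Finite K] (A : Submodule K V) :
    ((A : Set V) \ {0}).ncard = Nat.card K ^ finrank K A - 1 := by
  simpa using ncard_coe_sdiff_coe (A := A) (B := ⊥) (b := 0) (by simp) (zero_add _).symm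

end Counting

theorem GaussQ_one_right {q : ℕ} (hq : 0 < q) (m : ℕ) :
    GaussQ q m 1 = ((q ^ m - 1 : ℕ) : ℚ) / ((q - 1 : ℕ) : ℚ) := by
  simp [GaussQ, Nat.cast_sub (Nat.one_le_pow m q hq), Nat.cast_sub hq]

section Subspaces

variable {K V : Type*} [Field K] [AddCommGroup V] [Module K V] {G T R B : Submodule K V}

theorem sup_span_singleton_inf_eq_left {v : V} (hB : B ≤ G) (hv : v ∉ G) :
    (B ⊔ K ∙ v) ⊓ G = B := by
  rw [sup_inf_assoc_of_le _ hB, (disjoint_span_singleton_of_notMem hv).symm.eq_bot, sup_bot_eq]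

theorem notMem_sup_of_disjoint_sup_span_singleton {e : V} (he : e ∉ T)
    (hB : Disjoint (T ⊔ K ∙ e) B) : e ∉ T ⊔ B := by
  intro heB
  have inf_eq : (T ⊔ B) ⊓ (T ⊔ K ∙ e) = T := by
    rw [sup_inf_assoc_of_le _ le_sup_left, hB.symm.eq_bot, sup_bot_eq]
  exact he (inf_eq.le ⟨heB, le_sup_right (a := T) (mem_span_singleton_self e)⟩)

theorem inf_sup_eq_of_isCompl (hRT : IsCompl R T) (hTG : T ≤ G) : G ⊓ R ⊔ T = G := by
  rw [inf_sup_assoc_of_le _ hTG, hRT.sup_eq_top, inf_top_eq]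

theorem finrank_inf_add_finrank_of_isCompl [FiniteDimensional K V] (hRT : IsCompl R T)
    (hTG : T ≤ G) : finrank K ↥(G ⊓ R) + finrank K T = finrank K G := by
  have h := finrank_sup_add_finrank_inf_eq (G ⊓ R) T
  rwa [inf_sup_eq_of_isCompl hRT hTG, (hRT.disjoint.mono_left inf_le_right).eq_bot, finrank_bot,
    add_zero, eq_comm] at h

end Subspaces

/-- The nonzero vectors `e` of `U` for which at least two members of `F` contain `T ⊔ ⟨e⟩`. For
`U = G ⊓ R` these are the generators of the lines `E` allowed in `FamA`; counting vectors rather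
than lines multiplies all counts by `q - 1`. -/
def sharedVectors {K V : Type*} [Field K] [AddCommGroup V] [Module K V]
    (F : Set (Submodule K V)) (T U : Submodule K V) : Set V :=
  {e | e ∈ U ∧ e ≠ 0 ∧ 1 < {H ∈ F | T ⊔ K ∙ e ≤ H}.ncard}

section SharedVectors

variable {K V : Type*} [Field K] [Finite K] [AddCommGroup V] [Module K V] [FiniteDimensional K V]
  {F : Set (Submodule K V)} {T R : Submodule K V}

theorem mem_sharedVectors_of_mem_of_mem {G H : Submodule K V} (hG : G ∈ F ∧ T ≤ G)
    (hH : H ∈ F ∧ T ≤ H) (hne : G ≠ H) {e : V} (he : e ≠ 0) (heG : e ∈ G ⊓ R) (heH : e ∈ H ⊓ R) :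
    e ∈ sharedVectors F T (G ⊓ R) := by
  have : Finite V := Module.finite_of_finite K
  refine ⟨heG, he, (Set.one_lt_ncard (Set.toFinite _)).2 ⟨G, ⟨hG.1, ?_⟩, H, ⟨hH.1, ?_⟩, hne⟩⟩
  · exact sup_le hG.2 ((span_singleton_le_iff_mem _ _).2 heG.1)
  · exact sup_le hH.2 ((span_singleton_le_iff_mem _ _).2 heH.1)

theorem sum_ncard_unshared_le {S : Finset (Submodule K V)} (hS : ∀ G ∈ S, G ∈ F ∧ T ≤ G) :
    ∑ G ∈ S, ((((G ⊓ R : Submodule K V) : Set V) \ {0}) \ sharedVectors F T (G ⊓ R)).ncard ≤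
      Nat.card K ^ finrank K R - 1 := by
  have : Finite V := Module.finite_of_finite K
  have unshared_disjoint : (S : Set (Submodule K V)).PairwiseDisjoint fun G =>
      (((G ⊓ R : Submodule K V) : Set V) \ {0}) \ sharedVectors F T (G ⊓ R) := by
    intro G hG H hH hne
    refine Set.disjoint_left.2 fun e he he' => he.2 ?_
    exact mem_sharedVectors_of_mem_of_mem (hS G hG) (hS H hH) hne he.1.2 he.1.1 he'.1.1
  rw [← finsum_mem_coe_finset, ← S.finite_toSet.ncard_biUnion (fun _ _ => Set.toFinite _)
    unshared_disjoint, ← ncard_coe_sdiff_zero]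
  refine Set.ncard_le_ncard (Set.iUnion₂_subset fun G _ e he => ?_)
  exact ⟨he.1.1.2, he.1.2⟩

theorem card_mul_le_sum_ncard_sharedVectors {t : ℕ} {S : Finset (Submodule K V)}
    (hS : ∀ G ∈ S, G ∈ F ∧ T ≤ G) (ht : ∀ G ∈ S, finrank K ↥(G ⊓ R) = t) :
    S.card * (Nat.card K ^ t - 1) ≤
      ∑ G ∈ S, (sharedVectors F T (G ⊓ R)).ncard + (Nat.card K ^ finrank K R - 1) := by
  have : Finite V := Module.finite_of_finite K
  have ncard_split : ∀ G ∈ S, Nat.card K ^ t - 1 = (sharedVectors F T (G ⊓ R)).ncard +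
      ((((G ⊓ R : Submodule K V) : Set V) \ {0}) \ sharedVectors F T (G ⊓ R)).ncard := by
    intro G hG
    have shared_subset : sharedVectors F T (G ⊓ R) ⊆ ((G ⊓ R : Submodule K V) : Set V) \ {0} :=
      fun e he => ⟨he.1, he.2.1⟩
    rw [← ht G hG, ← ncard_coe_sdiff_zero, add_comm,
      Set.ncard_sdiff_add_ncard_of_subset shared_subset]
  rw [← smul_eq_mul, ← Finset.sum_const, Finset.sum_congr rfl ncard_split,
    Finset.sum_add_distrib]
  exact Nat.add_le_add_left (sum_ncard_unshared_le hS) _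

end SharedVectors

theorem notMem_of_mem_sharedVectors {K V : Type*} [Field K] [AddCommGroup V] [Module K V]
    {F : Set (Submodule K V)} {G T R : Submodule K V} {e : V} (hRT : IsCompl R T)
    (he : e ∈ sharedVectors F T (G ⊓ R)) : e ∉ T :=
  fun heT => he.2.1 (disjoint_def.1 hRT.disjoint e he.1.2 heT)

section FamA

variable {K V : Type*} [Field K] [AddCommGroup V] [Module K V] [FiniteDimensional K V]
  {F : Set (Submodule K V)} {G T R A B : Submodule K V} {d s m : ℕ} {e v : V}

theorem sup_span_singleton_mem_FamA (hRT : IsCompl R T) (hTG : T ≤ G) (hT : finrank K T = d)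
    (hG : finrank K G = d + (s + 1)) (he : e ∈ sharedVectors F T (G ⊓ R))
    (hB : Disjoint (T ⊔ K ∙ e) B) (hBG : T ⊔ K ∙ e ⊔ B = G) (hv : v ∉ G) :
    B ⊔ K ∙ v ∈ FamA F (s + 1) G T R := by
  have heT : e ∉ T := notMem_of_mem_sharedVectors hRT he
  have hBle : B ≤ G := hBG ▸ le_sup_right
  have inf_eq : (B ⊔ K ∙ v) ⊓ G = B := sup_span_singleton_inf_eq_left hBle hv
  have finrank_B : finrank K B = s := by
    have h := finrank_sup_add_finrank_inf_eq (T ⊔ K ∙ e) B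
    rw [hBG, hB.eq_bot, finrank_bot, finrank_sup_span_singleton heT, hG, hT] at h
    omega
  refine ⟨?_, ?_, ?_, K ∙ e, ?_, finrank_span_singleton he.2.1, he.2.2, ?_, ?_, ?_⟩
  · rw [finrank_sup_span_singleton fun h => hv (hBle h), finrank_B]
  · rw [← inf_eq_right.2 hTG, ← inf_assoc, inf_eq]
    exact (hB.mono_left le_sup_left).symm.eq_bot
  · rw [inf_eq, finrank_B, Nat.add_sub_cancel]
  · exact (span_singleton_le_iff_mem _ _).2 he.1
  · exact (disjoint_span_singleton_of_notMem heT).eq_bot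
  · rw [inf_eq, hB.eq_bot]
  · rw [inf_eq, hBG]

theorem pow_le_ncard_FamA_incident [Finite K] (hRT : IsCompl R T) (hTG : T ≤ G)
    (hT : finrank K T = d) (hG : finrank K G = d + (s + 1))
    (he : e ∈ sharedVectors F T (G ⊓ R)) (hv : v ∉ G) :
    Nat.card K ^ ((d + 1) * s) ≤
      {A ∈ FamA F (s + 1) G T R | e ∉ T ⊔ A ⊓ G ∧ v ∈ A}.ncard := by
  have : Finite V := Module.finite_of_finite K
  have heT : e ∉ T := notMem_of_mem_sharedVectors hRT he
  have finrank_sup : finrank K ↥(T ⊔ K ∙ e) = d + 1 := by rw [finrank_sup_span_singleton heT, hT]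
  have hle : T ⊔ K ∙ e ≤ G := sup_le hTG ((span_singleton_le_iff_mem _ _).2 he.1.1)
  have inf_eq {B : Submodule K V} (hB : T ⊔ K ∙ e ⊔ B = G) : (B ⊔ K ∙ v) ⊓ G = B :=
    sup_span_singleton_inf_eq_left (hB ▸ le_sup_right) hv
  calc Nat.card K ^ ((d + 1) * s)
      = {B : Submodule K V | Disjoint (T ⊔ K ∙ e) B ∧ T ⊔ K ∙ e ⊔ B = G}.ncard := by
        rw [ncard_relative_complements hle, finrank_sup, hG, Nat.add_sub_add_left,
          Nat.add_sub_cancel]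
    _ ≤ _ := Set.ncard_le_ncard_of_injOn (fun B => B ⊔ K ∙ v) ?_ ?_
  · rintro B ⟨hB, hBG⟩
    refine ⟨sup_span_singleton_mem_FamA hRT hTG hT hG he hB hBG hv, ?_,
      le_sup_right (a := B) (mem_span_singleton_self v)⟩
    rw [inf_eq hBG]
    exact notMem_sup_of_disjoint_sup_span_singleton heT hB
  · rintro B ⟨-, hB⟩ C ⟨-, hC⟩ hBC
    rw [← inf_eq hB, ← inf_eq hC]
    exact congrArg (· ⊓ G) hBC

theorem ncard_inf_sdiff_of_mem_FamA [Finite K] (hRT : IsCompl R T) (hTG : T ≤ G)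
    (hT : finrank K T = d) (hG : finrank K G = d + (s + 1)) (hA : A ∈ FamA F (s + 1) G T R) :
    (((G ⊓ R : Submodule K V) : Set V) \ (T ⊔ A ⊓ G : Submodule K V)).ncard =
      Nat.card K ^ s * (Nat.card K - 1) := by
  obtain ⟨-, hAT, hAG, -⟩ := hA
  have finrank_inf : finrank K ↥(G ⊓ R) = s + 1 := by
    have := finrank_inf_add_finrank_of_isCompl hRT hTG
    omega
  have finrank_sup : finrank K ↥(T ⊔ A ⊓ G) = d + s := by
    have h := finrank_sup_add_finrank_inf_eq T (A ⊓ G)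
    rw [← inf_assoc, inf_comm T A, hAT, bot_inf_eq, finrank_bot, hT, hAG] at h
    omega
  have sup_eq : G ⊓ R ⊔ (T ⊔ A ⊓ G) = G := by
    rw [← sup_assoc, inf_sup_eq_of_isCompl hRT hTG, sup_eq_left.2 inf_le_right]
  refine (ncard_coe_sdiff_coe (b := s) ?_ finrank_inf).trans (by rw [pow_one])
  have h := finrank_sup_add_finrank_inf_eq (G ⊓ R) (T ⊔ A ⊓ G)
  rw [sup_eq, hG, finrank_inf, finrank_sup] at h
  omega

theorem ncard_sharedVectors_mul_le_ncard_FamA_mul [Finite K] (hRT : IsCompl R T) (hTG : T ≤ G)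
    (hT : finrank K T = d) (hG : finrank K G = d + (s + 1))
    (hV : finrank K V = d + (s + 1) + m) :
    (sharedVectors F T (G ⊓ R)).ncard * (Nat.card K ^ (d + (s + 1)) * (Nat.card K ^ m - 1)) *
        Nat.card K ^ ((d + 1) * s) ≤
      (FamA F (s + 1) G T R).ncard * ((Nat.card K ^ s * (Nat.card K - 1)) *
        (Nat.card K ^ s * (Nat.card K - 1))) := by
  classical
  have : Finite V := Module.finite_of_finite K
  have : Fintype V := Fintype.ofFinite V
  have : Fintype (Submodule K V) := Fintype.ofFinite _
  have ncard_outside : (((⊤ : Submodule K V) : Set V) \ G).ncard =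
      Nat.card K ^ (d + (s + 1)) * (Nat.card K ^ m - 1) :=
    ncard_coe_sdiff_coe (by rw [top_inf_eq, hG]) (by rw [finrank_top, hV])
  rw [← ncard_outside, ← Set.ncard_prod, Set.ncard_eq_toFinset_card',
    Set.ncard_eq_toFinset_card' (FamA F (s + 1) G T R)]
  refine Finset.card_mul_le_card_mul (fun x A => x.1 ∉ T ⊔ A ⊓ G ∧ x.2 ∈ A) ?_ ?_
  · rintro ⟨e, v⟩ hev
    obtain ⟨he, -, hv⟩ := Set.mem_toFinset.1 hev
    refine (pow_le_ncard_FamA_incident hRT hTG hT hG he hv).trans_eq ?_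
    rw [← Set.ncard_coe_finset, Finset.coe_bipartiteAbove]
    simp only [Set.mem_toFinset]
  · intro A hA
    rw [Set.mem_toFinset] at hA
    have ncard_A_sdiff : ((A : Set V) \ G).ncard = Nat.card K ^ s * (Nat.card K - 1) :=
      (ncard_coe_sdiff_coe hA.2.2.1 hA.1).trans (by rw [Nat.add_sub_cancel, pow_one])
    nth_rw 1 [← ncard_inf_sdiff_of_mem_FamA hRT hTG hT hG hA]
    rw [← ncard_A_sdiff, ← Set.ncard_prod, ← Set.ncard_coe_finset, Finset.coe_bipartiteBelow]
    refine Set.ncard_le_ncard ?_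
    rintro ⟨e, v⟩ ⟨hev, heA, hvA⟩
    obtain ⟨he, -, hv⟩ := Set.mem_toFinset.1 hev
    exact ⟨⟨he.1, heA⟩, hvA, hv⟩

theorem pow_mul_ncard_sharedVectors_le [Finite K] (hRT : IsCompl R T) (hTG : T ≤ G)
    (hT : finrank K T = d) (hG : finrank K G = d + (s + 1))
    (hV : finrank K V = d + (s + 1) + m) :
    Nat.card K ^ (d * (s + 1) + 1) * (Nat.card K ^ m - 1) * (sharedVectors F T (G ⊓ R)).ncard ≤
      (FamA F (s + 1) G T R).ncard * (Nat.card K - 1) ^ 2 := by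
  refine Nat.le_of_mul_le_mul_left ?_ (pow_pos Nat.card_pos (2 * s) : 0 < Nat.card K ^ (2 * s))
  convert ncard_sharedVectors_mul_le_ncard_FamA_mul (F := F) hRT hTG hT hG hV using 1 <;> ring

end FamA

section GaussQ

variable {K V : Type*} [Field K] [Finite K] [AddCommGroup V] [Module K V] [FiniteDimensional K V]
  {F : Set (Submodule K V)} {T R : Submodule K V}

theorem GaussQ_mul_card_sub_GaussQ_le_sum_ncard_div {t : ℕ} {S : Finset (Submodule K V)}
    (hS : ∀ G ∈ S, G ∈ F ∧ T ≤ G) (ht : ∀ G ∈ S, finrank K ↥(G ⊓ R) = t) :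
    GaussQ (Nat.card K) t 1 * S.card - GaussQ (Nat.card K) (finrank K R) 1 ≤
      ∑ G ∈ S, ((sharedVectors F T (G ⊓ R)).ncard : ℚ) / ((Nat.card K - 1 : ℕ) : ℚ) := by
  rw [GaussQ_one_right Nat.card_pos, GaussQ_one_right Nat.card_pos, ← Finset.sum_div,
    div_mul_eq_mul_div, ← sub_div, mul_comm]
  refine div_le_div_of_nonneg_right (sub_le_iff_le_add.2 ?_) (Nat.cast_nonneg _)
  exact_mod_cast card_mul_le_sum_ncard_sharedVectors hS ht

theorem pow_mul_GaussQ_mul_le_ncard_FamA {G : Submodule K V} {d s m : ℕ} (hRT : IsCompl R T)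
    (hTG : T ≤ G) (hT : finrank K T = d) (hG : finrank K G = d + (s + 1))
    (hV : finrank K V = d + (s + 1) + m) :
    (Nat.card K : ℚ) ^ (d * (s + 1) + 1) * GaussQ (Nat.card K) m 1 *
        (((sharedVectors F T (G ⊓ R)).ncard : ℚ) / ((Nat.card K - 1 : ℕ) : ℚ)) ≤
      (FamA F (s + 1) G T R).ncard := by
  have q_sub_one_pos : (0 : ℚ) < ((Nat.card K - 1 : ℕ) : ℚ) :=
    Nat.cast_pos.2 (Nat.sub_pos_of_lt Finite.one_lt_card)
  rw [GaussQ_one_right Nat.card_pos, mul_assoc, div_mul_div_comm,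
    ← mul_div_assoc, ← mul_assoc, ← sq,
    div_le_iff₀ (pow_pos q_sub_one_pos 2)]
  exact_mod_cast pow_mul_ncard_sharedVectors_le hRT hTG hT hG hV

end GaussQ

theorem stmt13_general {q n d t : ℕ} {K V : Type*} [Field K] [Finite K] (hK : Nat.card K = q)
    [AddCommGroup V] [Module K V] [FiniteDimensional K V] (hV : finrank K V = n) (ht : 1 ≤ t)
    (hn : d + t ≤ n) {F : Set (Submodule K V)} {T R : Submodule K V} (hT : finrank K T = d)
    (hF : ∀ G ∈ F, T ≤ G → finrank K G = d + t) (hRT : IsCompl R T) :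
    (q : ℚ) ^ (d * t + 1) * GaussQ q (n - (d + t)) 1 *
        (GaussQ q t 1 * ({G ∈ F | T ≤ G}.ncard : ℚ) - GaussQ q (n - d) 1) ≤
      ∑ᶠ G ∈ {G ∈ F | T ≤ G}, ((FamA F t G T R).ncard : ℚ) := by
  have : Finite V := Module.finite_of_finite K
  have hfin : {G ∈ F | T ≤ G}.Finite := Set.toFinite _
  have mem_S (G : Submodule K V) (hG : G ∈ hfin.toFinset) : G ∈ F ∧ T ≤ G :=
    hfin.mem_toFinset.1 hG
  obtain ⟨s, rfl⟩ := Nat.exists_eq_add_of_le' ht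
  obtain ⟨m, rfl⟩ := Nat.exists_eq_add_of_le hn
  have finrank_inf (G : Submodule K V) (hG : G ∈ hfin.toFinset) :
      finrank K ↥(G ⊓ R) = s + 1 := by
    have := finrank_inf_add_finrank_of_isCompl hRT (mem_S G hG).2
    have := hF G (mem_S G hG).1 (mem_S G hG).2
    omega
  have finrank_R : d + (s + 1) + m - d = finrank K R := by
    have := finrank_add_eq_of_isCompl hRT
    omega
  subst hK
  rw [finsum_mem_eq_finite_toFinset_sum _ hfin, Set.ncard_eq_toFinset_card _ hfin, finrank_R,
    Nat.add_sub_cancel_left]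
  calc _ ≤ (Nat.card K : ℚ) ^ (d * (s + 1) + 1) * GaussQ (Nat.card K) m 1 *
        ∑ G ∈ hfin.toFinset,
          ((sharedVectors F T (G ⊓ R)).ncard : ℚ) / ((Nat.card K - 1 : ℕ) : ℚ) := by
        refine mul_le_mul_of_nonneg_left
          (GaussQ_mul_card_sub_GaussQ_le_sum_ncard_div mem_S finrank_inf) ?_
        rw [GaussQ_one_right Nat.card_pos]
        positivity
    _ ≤ _ := by
        rw [Finset.mul_sum]
        refine Finset.sum_le_sum fun G hG => ?_
        exact pow_mul_GaussQ_mul_le_ncard_FamA hRT (mem_S G hG).2 hT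
          (hF G (mem_S G hG).1 (mem_S G hG).2) hV

theorem stmt13 (q n t : ℕ) (K : Type*) [Field K] [Fintype K] (hK : Fintype.card K = q)
    (V : Type*) [AddCommGroup V] [Module K V] [FiniteDimensional K V]
    (hV : Module.finrank K V = n) (ht : 2 ≤ t) (hn : 2 * t + 1 ≤ n)
    (F : Set (Submodule K V)) (hdim : ∀ A ∈ F, Module.finrank K A = 2 * t)
    (hcf : IsCoverFree F)
    (T : Submodule K V) (hT : Module.finrank K T = t)
    (R : Submodule K V) (hR : Module.finrank K R = n - t)
    (hRT : R ⊓ T = ⊥) (hRTsum : R ⊔ T = ⊤) :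
    (q : ℚ) ^ (t ^ 2 + 1) * GaussQ q (n - 2 * t) 1 *
        (GaussQ q t 1 * ({G ∈ F | T ≤ G}.ncard : ℚ) - GaussQ q (n - t) 1) ≤
      ∑ᶠ G ∈ {G ∈ F | T ≤ G}, ((FamA F t G T R).ncard : ℚ) := by
  have h := stmt13_general (Nat.card_eq_fintype_card.trans hK) hV (by omega) (by omega) hT
    (fun G hG _ => (hdim G hG).trans (two_mul t)) ⟨disjoint_iff.2 hRT, codisjoint_iff.2 hRTsum⟩
  rwa [← two_mul, ← sq] at h
end
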